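/- Let T be a triangulated category with a semiorthogonal decomposition T = ⟨T₁, T₂⟩, and let T₁^{≤0} and T₂^{≤0} be compatible t-structures on T₁ and T₂ with hearts A₁ and A₂, giving the t-structure T^{≤0} := T₂^{≤0} * (T₁^{≤0}[1]) on T with heart A. If at least one of A₁, A₂ is nonzero, then dim_T A = max{ dim_{T₁} A₁, dim_{T₂} A₂, rdim_T(A₁, A₂) + 1 }. -/

import Mathlib

open CategoryTheory Category Limits Pretriangulated

namespace Paper

universe v u

variable {C : Type u} [Category.{v} C] [HasZeroObject C] [Preadditive C]
  [HasShift C ℤ] [∀ n : ℤ, (shiftFunctor C n).Additive] [Pretriangulated C]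

/-- The right orthogonal of a set of objects: objects receiving only zero maps. -/
def rOrth (S : Set C) : Set C := {Y | ∀ X ∈ S, ∀ f : X ⟶ Y, f = 0}

/-- Shift of a set of objects by `n` (closed under isomorphism). -/
def shSet (S : Set C) (n : ℤ) : Set C := {Y | ∃ X ∈ S, Nonempty (Y ≅ X⟦n⟧)}

/-- The `*` operation on sets of objects of a triangulated category. -/
def star (X Y : Set C) : Set C :=
  {Z | ∃ (A : C) (_ : A ∈ X) (B : C) (_ : B ∈ Y) (f : A ⟶ Z) (g : Z ⟶ B)
    (h : B ⟶ A⟦(1 : ℤ)⟧), Triangle.mk f g h ∈ distTriang C}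

/-- A strictly full triangulated subcategory, encoded as a set of objects. -/
structure IsTriangulatedSub (S : Set C) : Prop where
  zero : ∀ X : C, IsZero X → X ∈ S
  isoClosed : ∀ {X Y : C}, (X ≅ Y) → X ∈ S → Y ∈ S
  shift : ∀ (n : ℤ), ∀ X ∈ S, X⟦n⟧ ∈ S
  ext₂ : ∀ T ∈ distTriang C, T.obj₁ ∈ S → T.obj₃ ∈ S → T.obj₂ ∈ S

/-- A t-structure on the full triangulated subcategory `S ⊆ C`, given by its aisle
`le` (playing the role of `S^{≤ 0}`).  The coaisle `S^{≥ 1}` is `S ∩ rOrth le`. -/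
structure IsTStructureOn (S le : Set C) : Prop where
  subset : le ⊆ S
  isoClosed : ∀ {X Y : C}, (X ≅ Y) → X ∈ le → Y ∈ le
  shift : ∀ X ∈ le, X⟦(1 : ℤ)⟧ ∈ le
  exists_triangle : ∀ E ∈ S, ∃ (A B : C) (_ : A ∈ le) (_ : B ∈ S ∩ rOrth le)
    (f : A ⟶ E) (g : E ⟶ B) (h : B ⟶ A⟦(1 : ℤ)⟧), Triangle.mk f g h ∈ distTriang C

/-- `S^{≤ i} := S^{≤ 0}[-i]`. -/
def leN (le : Set C) (i : ℤ) : Set C := shSet le (-i)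

/-- `S^{≥ j} := S^{≥ 1}[-j+1]`. -/
def geN (S le : Set C) (j : ℤ) : Set C := shSet (S ∩ rOrth le) (1 - j)

/-- The heart `S^{≤ 0} ∩ S^{≥ 0}` of a t-structure on `S`. -/
def heartOn (S le : Set C) : Set C := leN le 0 ∩ geN S le 0

/-- Boundedness of a t-structure on `S`. -/
def IsBoundedOn (S le : Set C) : Prop := ∀ E ∈ S, ∃ i j : ℤ, E ∈ leN le i ∧ E ∈ geN S le j

/-- Non-degeneracy of a t-structure on `S`. -/
def IsNonDegenerateOn (S le : Set C) : Prop :=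
  (∀ E : C, (∀ i : ℤ, E ∈ leN le i) → IsZero E) ∧
  (∀ E : C, (∀ j : ℤ, E ∈ geN S le j) → IsZero E)

/-- A semiorthogonal decomposition `C = ⟨S₁, S₂⟩`. -/
structure IsSOD (S₁ S₂ : Set C) : Prop where
  sub₁ : IsTriangulatedSub S₁
  sub₂ : IsTriangulatedSub S₂
  orth : ∀ X ∈ S₂, ∀ Y ∈ S₁, ∀ f : X ⟶ Y, f = 0
  exists_triangle : ∀ E : C, ∃ (A B : C) (_ : A ∈ S₂) (_ : B ∈ S₁)
    (f : A ⟶ E) (g : E ⟶ B) (h : B ⟶ A⟦(1 : ℤ)⟧), Triangle.mk f g h ∈ distTriang C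

/-- Compatibility of t-structures `le₁` on `S₁` and `le₂` on `S₂` in `C`:
`Hom(S₁^{≤0}, S₂^{≥1}) = 0`. -/
def Compatible (S₂ le₁ le₂ : Set C) : Prop :=
  ∀ X ∈ le₁, ∀ Y ∈ S₂ ∩ rOrth le₂, ∀ f : X ⟶ Y, f = 0

/-- The glued aisle `T^{≤0} := T₂^{≤0} * (T₁^{≤0}[1])`. -/
def glued (le₁ le₂ : Set C) : Set C := star le₂ (shSet le₁ 1)

/-- The homological dimension `dim_C H` of a full subcategory `H` (e.g. a heart):
the supremum (in the extended reals) of the integers `n` such that `Hom(A, B[n]) ≠ 0`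
for some `A, B ∈ H`. -/
noncomputable def homDim (H : Set C) : EReal :=
  sSup {x : EReal | ∃ n : ℤ, x = ((n : ℝ) : EReal) ∧
    ∃ A ∈ H, ∃ B ∈ H, ∃ f : A ⟶ B⟦n⟧, f ≠ 0}

open Classical in
/-- The relative dimension `rdim_C (H₁, H₂)`: the supremum of the integers `m` with
`Hom(H₁, H₂[m]) ≠ 0` if there is such an integer, and `-1` otherwise. -/
noncomputable def relDim (H₁ H₂ : Set C) : EReal :=
  if (∃ m : ℤ, ∃ A ∈ H₁, ∃ B ∈ H₂, ∃ f : A ⟶ B⟦m⟧, f ≠ 0) then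
    sSup {x : EReal | ∃ m : ℤ, x = ((m : ℝ) : EReal) ∧
      ∃ A ∈ H₁, ∃ B ∈ H₂, ∃ f : A ⟶ B⟦m⟧, f ≠ 0}
  else (-1 : EReal)

set_option linter.unusedSectionVars false

/-- All morphisms from `X` to `Y` vanish. -/
def HZ (X Y : C) : Prop := ∀ f : X ⟶ Y, f = 0

lemma HZ.iso {X X' Y Y' : C} (h : HZ X Y) (e : X' ≅ X) (e' : Y' ≅ Y) : HZ X' Y' := by
  intro f
  have := h (e.inv ≫ f ≫ e'.hom)
  rw [← cancel_epi e.inv, ← cancel_mono e'.hom]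
  simpa using this

lemma HZ.shift {X Y : C} (h : HZ X Y) (n : ℤ) : HZ (X⟦n⟧) (Y⟦n⟧) := by
  intro f
  obtain ⟨g, rfl⟩ := (shiftFunctor C n).map_surjective f
  rw [h g, Functor.map_zero]

lemma HZ.unshift {X Y : C} (n : ℤ) (h : HZ (X⟦n⟧) (Y⟦n⟧)) : HZ X Y := by
  intro f
  apply (shiftFunctor C n).map_injective
  rw [h ((shiftFunctor C n).map f), Functor.map_zero]

lemma HZ.of_source {T : Triangle C} (hT : T ∈ distTriang C) {Y : C}
    (h₁ : HZ T.obj₁ Y) (h₃ : HZ T.obj₃ Y) : HZ T.obj₂ Y := by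
  intro f
  obtain ⟨g, rfl⟩ := Triangle.yoneda_exact₂ T hT f (h₁ _)
  rw [h₃ g, comp_zero]

lemma HZ.of_target {T : Triangle C} (hT : T ∈ distTriang C) {X : C}
    (h₁ : HZ X T.obj₁) (h₃ : HZ X T.obj₃) : HZ X T.obj₂ := by
  intro f
  obtain ⟨g, rfl⟩ := Triangle.coyoneda_exact₂ T hT f (h₃ _)
  rw [h₁ g, zero_comp]

lemma heart_iff {S le : Set C} (hle : ∀ {X Y : C}, (X ≅ Y) → X ∈ le → Y ∈ le) (E : C) :
    E ∈ heartOn S le ↔ E ∈ le ∧ ∃ Y ∈ S ∩ rOrth le, Nonempty (E ≅ Y⟦(1 : ℤ)⟧) := by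
  constructor
  · rintro ⟨⟨X, hX, ⟨e⟩⟩, ⟨Y, hY, ⟨e'⟩⟩⟩
    refine ⟨hle (e ≪≫ (shiftFunctorZero' C (-0 : ℤ) (by simp)).app X).symm hX, Y, hY, ⟨?_⟩⟩
    exact e' ≪≫ eqToIso (by simp)
  · rintro ⟨hE, Y, hY, ⟨e⟩⟩
    exact ⟨⟨E, hE, ⟨((shiftFunctorZero' C (-0 : ℤ) (by simp)).app E).symm⟩⟩,
      ⟨Y, hY, ⟨e ≪≫ eqToIso (by simp)⟩⟩⟩

lemma heart_of_HZ {S le : Set C} (hS : ∀ X ∈ S, X⟦(-1 : ℤ)⟧ ∈ S)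
    (hle : ∀ {X Y : C}, (X ≅ Y) → X ∈ le → Y ∈ le) {E : C}
    (hE : E ∈ le) (hES : E ∈ S) (h : ∀ X ∈ le, HZ (X⟦(1 : ℤ)⟧) E) : E ∈ heartOn S le := by
  rw [heart_iff hle]
  have e : E⟦(-1 : ℤ)⟧⟦(1 : ℤ)⟧ ≅ E := (shiftFunctorCompIsoId C (-1 : ℤ) 1 (by simp)).app E
  refine ⟨hE, E⟦(-1 : ℤ)⟧, ⟨hS _ hES, fun X hX => ?_⟩, ⟨e.symm⟩⟩
  exact HZ.unshift 1 ((h X hX).iso (Iso.refl _) e)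

lemma zero_mem {S le : Set C} (hS : IsTriangulatedSub S) (h : IsTStructureOn S le) (X : C)
    (hX : IsZero X) : X ∈ le := by
  obtain ⟨A, B, hA, hB, f, g, k, hT⟩ := h.exists_triangle X (hS.zero X hX)
  have : HZ (A⟦(1 : ℤ)⟧) (A⟦(1 : ℤ)⟧) := by
    refine HZ.of_target (rot_of_distTriang _ (rot_of_distTriang _ hT)) ?_ ?_
    · exact fun w => hB.2 _ (h.shift _ hA) w
    · exact fun w => ((shiftFunctor C (1 : ℤ)).map_isZero hX).eq_of_tgt w 0
  have hA0 : IsZero A := by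
    rw [IsZero.iff_id_eq_zero]
    exact HZ.unshift 1 this _
  exact h.isoClosed (hA0.iso hX) hA

lemma glued_iso {le₁ le₂ : Set C} {X Y : C} (e : X ≅ Y) (h : X ∈ glued le₁ le₂) :
    Y ∈ glued le₁ le₂ := by
  obtain ⟨A, hA, B, hB, f, g, k, hT⟩ := h
  refine ⟨A, hA, B, hB, f ≫ e.hom, e.inv ≫ g, k, ?_⟩
  exact isomorphic_distinguished _ hT _
    (Triangle.isoMk _ _ (Iso.refl A) e.symm (Iso.refl B)
      (show (f ≫ e.hom) ≫ e.inv = 𝟙 A ≫ f by simp)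
      (show (e.inv ≫ g) ≫ 𝟙 B = e.inv ≫ g by simp)
      (show k ≫ (𝟙 A)⟦(1 : ℤ)⟧' = 𝟙 B ≫ k by simp))

section main
variable {S₁ S₂ le₁ le₂ : Set C}

open scoped ZeroObject in
lemma glued_of₂ (hSOD : IsSOD S₁ S₂) (h₁ : IsTStructureOn S₁ le₁) {A : C} (hA : A ∈ le₂) :
    A ∈ glued le₁ le₂ := by
  refine ⟨A, hA, 0, ⟨0, zero_mem hSOD.sub₁ h₁ _ (isZero_zero C),
    ⟨((shiftFunctor C (1 : ℤ)).map_isZero (isZero_zero C)).isoZero.symm⟩⟩, 𝟙 A, 0, 0,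
    contractible_distinguished A⟩

open scoped ZeroObject in
lemma glued_of₁ (hSOD : IsSOD S₁ S₂) (h₂ : IsTStructureOn S₂ le₂) {A : C} (hA : A ∈ le₁) :
    A⟦(1 : ℤ)⟧ ∈ glued le₁ le₂ := by
  refine ⟨0, zero_mem hSOD.sub₂ h₂ _ (isZero_zero C), A⟦(1 : ℤ)⟧, ⟨A, hA, ⟨Iso.refl _⟩⟩,
    0, 𝟙 _, 0, contractible_distinguished₁ _⟩

lemma orth_glued {Y : C} (ha : ∀ X ∈ le₂, HZ X Y) (hb : ∀ X ∈ le₁, HZ (X⟦(1 : ℤ)⟧) Y) :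
    Y ∈ rOrth (glued le₁ le₂) := by
  rintro Z ⟨P, hP, Q, ⟨X, hX, ⟨e⟩⟩, f, g, k, hT⟩
  exact HZ.of_source hT (ha P hP) ((hb X hX).iso e (Iso.refl _))

lemma heart₂_sub (hSOD : IsSOD S₁ S₂) (h₁ : IsTStructureOn S₁ le₁)
    (h₂ : IsTStructureOn S₂ le₂) (hcomp : Compatible S₂ le₁ le₂) {A : C}
    (hA : A ∈ heartOn S₂ le₂) : A ∈ heartOn Set.univ (glued le₁ le₂) := by
  rw [heart_iff h₂.isoClosed] at hA
  rw [heart_iff glued_iso]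
  obtain ⟨hA, Y, hY, e⟩ := hA
  exact ⟨glued_of₂ hSOD h₁ hA, Y, ⟨trivial, orth_glued (fun X hX => hY.2 X hX)
    (fun X hX => hcomp _ (h₁.shift _ hX) Y hY)⟩, e⟩

lemma heart₁_sub (hSOD : IsSOD S₁ S₂) (h₁ : IsTStructureOn S₁ le₁)
    (h₂ : IsTStructureOn S₂ le₂) {W : C}
    (hW : W ∈ heartOn S₁ le₁) : W⟦(1 : ℤ)⟧ ∈ heartOn Set.univ (glued le₁ le₂) := by
  rw [heart_iff h₁.isoClosed] at hW
  rw [heart_iff glued_iso]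
  obtain ⟨hW, Y, hY, ⟨e⟩⟩ := hW
  refine ⟨glued_of₁ hSOD h₂ hW, W, ⟨trivial, orth_glued
    (fun X hX => hSOD.orth X (h₂.subset hX) W (h₁.subset hW)) (fun X hX => ?_)⟩, ⟨Iso.refl _⟩⟩
  exact (HZ.shift (hY.2 X hX) 1).iso (Iso.refl _) e

lemma heart_HZ {S le : Set C} (hle : ∀ {X Y : C}, (X ≅ Y) → X ∈ le → Y ∈ le) {E : C}
    (hE : E ∈ heartOn S le) {X : C} (hX : X ∈ le) : HZ (X⟦(1 : ℤ)⟧) E := by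
  rw [heart_iff hle] at hE
  obtain ⟨_, Y, hY, ⟨e⟩⟩ := hE
  exact (HZ.shift (hY.2 X hX) 1).iso (Iso.refl _) e

lemma comp_HZ (h₂ : IsTStructureOn S₂ le₂) (hcomp : Compatible S₂ le₁ le₂) {A X : C}
    (hA : A ∈ heartOn S₂ le₂) (hX : X ∈ le₁) : HZ (X⟦(1 : ℤ)⟧) A := by
  rw [heart_iff h₂.isoClosed] at hA
  obtain ⟨_, Y, hY, ⟨e⟩⟩ := hA
  exact (HZ.shift (hcomp X hX Y hY) 1).iso (Iso.refl _) e

lemma heart_triangle (hSOD : IsSOD S₁ S₂) (h₁ : IsTStructureOn S₁ le₁)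
    (h₂ : IsTStructureOn S₂ le₂) (hcomp : Compatible S₂ le₁ le₂) {E : C}
    (hE : E ∈ heartOn Set.univ (glued le₁ le₂)) :
    ∃ A ∈ heartOn S₂ le₂, ∃ W ∈ heartOn S₁ le₁, ∃ (B : C) (_ : B ≅ W⟦(1 : ℤ)⟧)
      (f : A ⟶ E) (g : E ⟶ B) (h : B ⟶ A⟦(1 : ℤ)⟧), Triangle.mk f g h ∈ distTriang C := by
  obtain ⟨A, hA, B, ⟨W, hW, ⟨e⟩⟩, f, g, k, hT⟩ := ((heart_iff glued_iso E).1 hE).1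
  have hA' : A ∈ heartOn S₂ le₂ := by
    refine heart_of_HZ (hSOD.sub₂.shift _) h₂.isoClosed hA (h₂.subset hA) (fun X hX => ?_)
    refine HZ.of_target (inv_rot_of_distTriang _ hT) ?_ ?_
    · refine hSOD.orth _ (hSOD.sub₂.shift _ _ (h₂.subset hX)) _ (hSOD.sub₁.shift _ _ ?_)
      exact hSOD.sub₁.isoClosed e.symm (hSOD.sub₁.shift _ _ (h₁.subset hW))
    · exact heart_HZ glued_iso hE (glued_of₂ hSOD h₁ hX)
  refine ⟨A, hA', W, ?_, B, e, f, g, k, hT⟩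
  refine heart_of_HZ (hSOD.sub₁.shift _) h₁.isoClosed hW (h₁.subset hW) (fun X hX => ?_)
  refine HZ.unshift 1 (HZ.iso ?_ (Iso.refl _) e.symm)
  refine HZ.of_target (rot_of_distTriang _ hT) ?_ ?_
  · exact heart_HZ glued_iso hE (glued_of₁ hSOD h₂ hX)
  · exact (comp_HZ h₂ hcomp hA' hX).shift 1

end main

lemma le_homDim {H : Set C} {A B : C} (hA : A ∈ H) (hB : B ∈ H) {n : ℤ}
    (h : ¬ HZ A (B⟦n⟧)) : ((n : ℝ) : EReal) ≤ homDim H := by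
  apply le_sSup
  simp only [HZ, not_forall] at h
  exact ⟨n, rfl, A, hA, B, hB, h⟩

lemma le_relDim {H₁ H₂ : Set C} {A B : C} (hA : A ∈ H₁) (hB : B ∈ H₂) {n : ℤ}
    (h : ¬ HZ A (B⟦n⟧)) : ((n : ℝ) : EReal) ≤ relDim H₁ H₂ := by
  simp only [HZ, not_forall] at h
  rw [relDim, if_pos ⟨n, A, hA, B, hB, h⟩]
  exact le_sSup ⟨n, rfl, A, hA, B, hB, h⟩

lemma HZ_shift_comm {W W' : C} {n : ℤ} :
    HZ (W⟦(1 : ℤ)⟧) (W'⟦(1 : ℤ)⟧⟦n⟧) ↔ HZ W (W'⟦n⟧) :=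
  ⟨fun h => HZ.unshift 1 (h.iso (Iso.refl _) (shiftComm W' n 1)),
    fun h => (h.shift 1).iso (Iso.refl _) (shiftComm W' 1 n)⟩

lemma HZ_shift_add {W A : C} {n m : ℤ} (hn : m + 1 = n) :
    HZ (W⟦(1 : ℤ)⟧) (A⟦n⟧) ↔ HZ W (A⟦m⟧) :=
  ⟨fun h => HZ.unshift 1 (h.iso (Iso.refl _) ((shiftFunctorAdd' C m 1 n hn).app A).symm),
    fun h => (h.shift 1).iso (Iso.refl _) ((shiftFunctorAdd' C m 1 n hn).app A)⟩

/-- Theorem 2.7, item 3: if at least one of the hearts `A₁`, `A₂` is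
nonzero, then the dimension of the glued heart is
`max { dim A₁, dim A₂, rdim(A₁, A₂) + 1 }`. -/
theorem glued_heart_dim {C : Type u} [Category.{v} C] [HasZeroObject C] [Preadditive C]
    [HasShift C ℤ] [∀ n : ℤ, (shiftFunctor C n).Additive] [Pretriangulated C]
    (S₁ S₂ le₁ le₂ : Set C) (hSOD : IsSOD S₁ S₂)
    (h₁ : IsTStructureOn S₁ le₁) (h₂ : IsTStructureOn S₂ le₂)
    (hcomp : Compatible S₂ le₁ le₂)
    (hnz : (∃ A ∈ heartOn S₁ le₁, ¬ IsZero A) ∨ (∃ A ∈ heartOn S₂ le₂, ¬ IsZero A)) :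
    homDim (heartOn Set.univ (glued le₁ le₂)) =
      max (max (homDim (heartOn S₁ le₁)) (homDim (heartOn S₂ le₂)))
        (relDim (heartOn S₁ le₁) (heartOn S₂ le₂) + 1) := by
  have key {A : C} (hA : A ∈ heartOn Set.univ (glued le₁ le₂)) (h : ¬ IsZero A) :
      (0 : EReal) ≤ homDim (heartOn Set.univ (glued le₁ le₂)) := by
    have := le_homDim (n := 0) hA hA (fun h0 => h (by
      rw [IsZero.iff_id_eq_zero]
      exact h0.iso (Iso.refl _) ((shiftFunctorZero C ℤ).app A).symm _))
    simpa using this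
  apply le_antisymm
  · apply sSup_le
    rintro _ ⟨n, rfl, E, hE, F, hF, u, hu⟩
    obtain ⟨A, hA, W, hW, B, e, f, g, k, hT⟩ := heart_triangle hSOD h₁ h₂ hcomp hE
    obtain ⟨A', hA', W', hW', B', e', f', g', k', hT'⟩ := heart_triangle hSOD h₁ h₂ hcomp hF
    by_contra hlt
    rw [le_max_iff, le_max_iff, not_or, not_or] at hlt
    obtain ⟨⟨hn₁, hn₂⟩, hn₃⟩ := hlt
    have mem₂ {X : C} (h : X ∈ heartOn S₂ le₂) : X ∈ S₂ :=
      h₂.subset ((heart_iff h₂.isoClosed X).1 h).1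
    have mem₁ {X : C} (h : X ∈ heartOn S₁ le₁) : X ∈ S₁ :=
      h₁.subset ((heart_iff h₁.isoClosed X).1 h).1
    have hs := Triangle.shift_distinguished _ hT' n
    refine hu (HZ.of_source hT (HZ.of_target hs ?_ ?_) (HZ.of_target hs ?_ ?_) u)
    · by_contra h
      exact hn₂ (le_homDim hA hA' h)
    · refine hSOD.orth _ (mem₂ hA) _ (hSOD.sub₁.shift _ _ ?_)
      exact hSOD.sub₁.isoClosed e'.symm (hSOD.sub₁.shift _ _ (mem₁ hW'))
    · by_contra h
      apply hn₃
      have h' : ¬ HZ W (A'⟦n - 1⟧) := fun h0 => h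
        (((HZ_shift_add (sub_add_cancel n 1)).2 h0).iso e (Iso.refl _))
      have := add_le_add (le_relDim hW hA' h') (le_refl (1 : EReal))
      refine le_trans (le_of_eq ?_) this
      have h1 : (n : ℝ) = ((n - 1 : ℤ) : ℝ) + 1 := by push_cast; ring
      rw [h1, EReal.coe_add, EReal.coe_one]
    · by_contra h
      apply hn₁
      refine le_homDim hW hW' (n := n) (fun h0 => h ?_)
      exact (HZ_shift_comm.2 h0).iso e ((shiftFunctor C n).mapIso e')
  · refine max_le (max_le ?_ ?_) ?_
    · apply sSup_le
      rintro _ ⟨n, rfl, W, hW, W', hW', u, hu⟩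
      exact le_homDim (heart₁_sub hSOD h₁ h₂ hW) (heart₁_sub hSOD h₁ h₂ hW')
        (fun h => hu (HZ_shift_comm.1 h u))
    · apply sSup_le
      rintro _ ⟨n, rfl, A, hA, A', hA', u, hu⟩
      exact le_homDim (heart₂_sub hSOD h₁ h₂ hcomp hA) (heart₂_sub hSOD h₁ h₂ hcomp hA')
        (fun h => hu (h u))
    · rw [relDim]
      split_ifs with hex
      · have hb : (1 : EReal) ≠ ⊥ := EReal.coe_ne_bot 1
        have ht : (1 : EReal) ≠ ⊤ := EReal.coe_ne_top 1
        refine (EReal.le_sub_iff_add_le (Or.inl hb) (Or.inl ht)).1 ?_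
        apply sSup_le
        rintro _ ⟨m, rfl, W, hW, A, hA, u, hu⟩
        refine (EReal.le_sub_iff_add_le (Or.inl hb) (Or.inl ht)).2 ?_
        have := le_homDim (n := m + 1) (heart₁_sub hSOD h₁ h₂ hW)
          (heart₂_sub hSOD h₁ h₂ hcomp hA) (fun h => hu ((HZ_shift_add rfl).1 h u))
        simpa using this
      · have h0 : (-1 : EReal) + 1 = 0 := by
          have : ((-1 + 1 : ℝ) : EReal) = ((0 : ℝ) : EReal) := by norm_num
          rw [EReal.coe_add] at this
          simpa using this
        rw [h0]
        rcases hnz with ⟨A, hA, hA0⟩ | ⟨A, hA, hA0⟩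
        · refine key (heart₁_sub hSOD h₁ h₂ hA) (fun h => hA0 ?_)
          rw [IsZero.iff_id_eq_zero]
          exact HZ.unshift 1 (fun f => h.eq_of_src f 0) _
        · exact key (heart₂_sub hSOD h₁ h₂ hcomp hA) hA0

end Paper
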